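/- Let p ∈ [1, ∞), let F : 𝕋 → ℂ be absolutely continuous with Ḟ ∈ L^p(𝕋), and let f = P[F] be its Poisson integral. Then both f_z and the conjugate of f_z̄ belong to the Bergman space B^p(𝔻), i.e., ∫_𝔻 |f_z(z)|^p dσ(z) < ∞ and ∫_𝔻 |f_z̄(z)|^p dσ(z) < ∞, where dσ is the normalized Lebesgue area measure on 𝔻. -/

import Mathlib

open MeasureTheory Complex Metric Set Filter
open scoped Real Topology ENNReal

noncomputable section

/-- The Poisson kernel `P(z) = (1-|z|^2)/|1-z|^2`. -/
def poissonKer (z : ℂ) : ℝ := (1 - ‖z‖ ^ 2) / ‖1 - z‖ ^ 2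

/-- The Poisson integral of a boundary function `F` defined on the unit circle. -/
def poissonInt (F : ℂ → ℂ) (z : ℂ) : ℂ :=
  (1 / (2 * π)) * ∫ t in (0:ℝ)..(2 * π),
    (poissonKer (z * Complex.exp (-(t : ℂ) * Complex.I)) : ℂ) *
      F (Complex.exp ((t : ℂ) * Complex.I))

/-- The Poisson integral of a (2π-periodic) function of the angular variable. -/
def poissonIntR (φ : ℝ → ℂ) (z : ℂ) : ℂ :=
  (1 / (2 * π)) * ∫ t in (0:ℝ)..(2 * π),
    (poissonKer (z * Complex.exp (-(t : ℂ) * Complex.I)) : ℂ) * φ t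

/-- The conjugate Poisson kernel `P̃(z) = Im((1+z)/(1-z))`. -/
def conjPoissonKer (z : ℂ) : ℝ := ((1 + z) / (1 - z)).im

/-- The conjugate Poisson integral of a function of the angular variable. -/
def conjPoissonIntR (φ : ℝ → ℂ) (z : ℂ) : ℂ :=
  (1 / (2 * π)) * ∫ t in (0:ℝ)..(2 * π),
    (conjPoissonKer (z * Complex.exp (-(t : ℂ) * Complex.I)) : ℂ) * φ t

/-- Wirtinger derivative `f_z = (1/2)(∂ₓ - i ∂_y) f`. -/
def wdz (f : ℂ → ℂ) (z : ℂ) : ℂ :=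
  (1 / 2) * (fderiv ℝ f z 1 - Complex.I * fderiv ℝ f z Complex.I)

/-- Wirtinger derivative `f_z̄ = (1/2)(∂ₓ + i ∂_y) f`. -/
def wdzb (f : ℂ → ℂ) (z : ℂ) : ℂ :=
  (1 / 2) * (fderiv ℝ f z 1 + Complex.I * fderiv ℝ f z Complex.I)

/-- The angular derivative `f_θ(z) = i (z f_z(z) - z̄ f_z̄(z))`. -/
def fTheta (f : ℂ → ℂ) (z : ℂ) : ℂ :=
  Complex.I * (z * wdz f z - (starRingEnd ℂ) z * wdzb f z)

/-- The radial derivative multiplied by `r`: `r f_r(z) = z f_z(z) + z̄ f_z̄(z)`. -/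
def rFr (f : ℂ → ℂ) (z : ℂ) : ℂ :=
  z * wdz f z + (starRingEnd ℂ) z * wdzb f z

/-- `F : 𝕋 → ℂ` is absolutely continuous with angular derivative `Ḟ = Fd`,
i.e. `t ↦ F(e^{it})` is an indefinite integral of the (locally integrable,
2π-periodic) function `Fd`. -/
def IsACDeriv (F : ℂ → ℂ) (Fd : ℝ → ℂ) : Prop :=
  (∀ a b : ℝ, IntervalIntegrable Fd MeasureTheory.volume a b) ∧
  Function.Periodic Fd (2 * π) ∧
  ∀ t : ℝ, F (Complex.exp ((t : ℂ) * Complex.I)) = F 1 + ∫ s in (0:ℝ)..t, Fd s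

/-- membership in `L^p(𝕋)`, identifying `𝕋` with `[0, 2π)`. -/
def MemLpT (p : ℝ≥0∞) (φ : ℝ → ℂ) : Prop :=
  MeasureTheory.MemLp φ p (MeasureTheory.volume.restrict (Ioc (0:ℝ) (2 * π)))

/-- The integral mean `M_p(r, g)`. -/
def Mp (p : ℝ) (g : ℂ → ℂ) (r : ℝ) : ℝ :=
  ((1 / (2 * π)) * ∫ θ in (0:ℝ)..(2 * π),
      ‖g ((r : ℂ) * Complex.exp ((θ : ℂ) * Complex.I))‖ ^ p) ^ (1 / p)

/-- The `L^p(𝕋)` norm `((1/2π) ∫ |φ|^p)^{1/p}`. -/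
def lpNormT (p : ℝ) (φ : ℝ → ℂ) : ℝ :=
  ((1 / (2 * π)) * ∫ t in (0:ℝ)..(2 * π), ‖φ t‖ ^ p) ^ (1 / p)

/-- Membership in the analytic Hardy space `H^p(𝔻)` for `p ∈ [1, ∞)`. -/
def MemHp (p : ℝ) (g : ℂ → ℂ) : Prop :=
  DifferentiableOn ℂ g (ball (0:ℂ) 1) ∧ ∃ M : ℝ, ∀ r ∈ Ioo (0:ℝ) 1, Mp p g r ≤ M

/-- Membership in `H^∞(𝔻)`: bounded analytic functions on the unit disk. -/
def MemHinf (g : ℂ → ℂ) : Prop :=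
  DifferentiableOn ℂ g (ball (0:ℂ) 1) ∧ ∃ M : ℝ, ∀ z ∈ ball (0:ℂ) 1, ‖g z‖ ≤ M

/-- Harmonicity on the unit disk: `f` is C² with vanishing Laplacian. -/
def HarmonicOnD (f : ℂ → ℂ) : Prop :=
  ContDiffOn ℝ 2 f (ball (0:ℂ) 1) ∧
  ∀ z ∈ ball (0:ℂ) 1,
    fderiv ℝ (fun w => fderiv ℝ f w 1) z 1
      + fderiv ℝ (fun w => fderiv ℝ f w Complex.I) z Complex.I = 0

/-- Membership in the harmonic Hardy space `h^p(𝔻)` for `p ∈ [1, ∞)`. -/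
def Memhp (p : ℝ) (g : ℂ → ℂ) : Prop :=
  HarmonicOnD g ∧ ∃ M : ℝ, ∀ r ∈ Ioo (0:ℝ) 1, Mp p g r ≤ M

/-- Membership in `h^∞(𝔻)`: bounded harmonic functions on the unit disk. -/
def Memhinf (g : ℂ → ℂ) : Prop :=
  HarmonicOnD g ∧ ∃ M : ℝ, ∀ z ∈ ball (0:ℂ) 1, ‖g z‖ ≤ M

/-- `L` is the value of the principal-value Hilbert transform
`(1/2π) p.v. ∫ φ(t)/tan((θ-t)/2) dt` of (the 2π-periodic) `φ` at `θ`. -/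
def IsPVHilbert (φ : ℝ → ℂ) (θ : ℝ) (L : ℂ) : Prop :=
  Filter.Tendsto
    (fun ε : ℝ => (1 / (2 * π)) *
      ∫ t in Ioo (θ - π) (θ + π) \ Ioo (θ - ε) (θ + ε),
        φ t / (Real.tan ((θ - t) / 2) : ℂ))
    (nhdsWithin 0 (Ioi 0)) (nhds L)

/-
Write `C` for the Cauchy transform. Decomposing the Poisson kernel as
`(1 - w)⁻¹ + conj (1 - w)⁻¹ - 1` gives `f = C[F] + conj C[conj F] - C[F](0)` on the disc, so that
`f_z = C[F]'` and `conj f_z̄ = C[conj F]'` are analytic. Integration by parts on the circle yields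
`C[F]'(z) = (2πi)⁻¹ ∫ Ḟ(t) / (e^{it} - z) dt`, and it remains to see that the kernel
`K = |e^{it} - z|⁻¹` maps `L^p(𝕋)` to `L^p(𝔻)`. This is a Schur test: by Hölder's inequality it
suffices that, for some `s`, `∫ K^s dt` is bounded uniformly in `z` (true for `s < 1`) and the area
integral of `K^(p - s(p - 1))` is bounded uniformly in `t` (true when the exponent is `< 2`).
-/

section AbsoluteContinuity

variable {X Y E : Type*} [PseudoMetricSpace X] [PseudoMetricSpace Y]
  [NormedAddCommGroup E] [NormedSpace ℝ E] {a b c : ℝ}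

theorem absolutelyContinuousOnInterval_of_dist_le {f : ℝ → X} {g : ℝ → Y}
    (hg : AbsolutelyContinuousOnInterval g a b)
    (h : ∀ x ∈ uIcc a b, ∀ y ∈ uIcc a b, dist (f x) (f y) ≤ dist (g x) (g y)) :
    AbsolutelyContinuousOnInterval f a b := by
  rw [absolutelyContinuousOnInterval_iff] at hg ⊢
  intro ε hε
  obtain ⟨δ, hδ, hgδ⟩ := hg ε hε
  refine ⟨δ, hδ, fun J hJ hlen => (Finset.sum_le_sum fun i hi => ?_).trans_lt (hgδ J hJ hlen)⟩
  exact h _ (hJ.1 i hi).1 _ (hJ.1 i hi).2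

theorem absolutelyContinuousOnInterval_intervalIntegral {f : ℝ → E}
    (hf : IntervalIntegrable f volume a b) (hc : IntervalIntegrable f volume c a) :
    AbsolutelyContinuousOnInterval (fun x => ∫ t in c..x, f t) a b := by
  refine absolutelyContinuousOnInterval_of_dist_le
    (hf.norm.absolutelyContinuousOnInterval_intervalIntegral (c := a) left_mem_uIcc)
    fun x hx y hy => ?_
  have hax := hf.mono_set (uIcc_subset_uIcc_left hx)
  have hay := hf.mono_set (uIcc_subset_uIcc_left hy)
  rw [dist_eq_norm, dist_eq_norm,
    intervalIntegral.integral_interval_sub_left (hc.trans hax) (hc.trans hay),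
    intervalIntegral.integral_interval_sub_left hax.norm hay.norm]
  exact intervalIntegral.norm_integral_le_abs_integral_norm

theorem intervalIntegral_eq_sub_of_absolutelyContinuousOnInterval [CompleteSpace E] {f f' : ℝ → E}
    (hf : AbsolutelyContinuousOnInterval f a b) (hf' : IntervalIntegrable f' volume a b)
    (hderiv : ∀ᵐ x, x ∈ uIcc a b → HasDerivAt f (f' x) x) :
    ∫ x in a..b, f' x = f b - f a := by
  have hac := hf.sub
    (absolutelyContinuousOnInterval_intervalIntegral hf' IntervalIntegrable.refl)
  obtain ⟨C, hC⟩ := hac.const_of_ae_hasDerivAt_zero (by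
    filter_upwards [hderiv, hf'.ae_hasDerivAt_integral] with x h₁ h₂ hx
    simpa only [sub_self] using! (h₁ hx).sub (h₂ hx a left_mem_uIcc))
  have hCab := (hC b right_mem_uIcc).trans (hC a left_mem_uIcc).symm
  simp only [Pi.sub_apply, intervalIntegral.integral_same, sub_zero] at hCab
  rw [← hCab, sub_sub_cancel]

theorem intervalIntegral_smul_deriv_of_absolutelyContinuousOnInterval {𝕜 : Type*} [RCLike 𝕜]
    [NormedSpace 𝕜 E] [CompleteSpace E] {u u' : ℝ → 𝕜} {v v' : ℝ → E}
    (hu : AbsolutelyContinuousOnInterval u a b) (hv : AbsolutelyContinuousOnInterval v a b)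
    (hu' : IntervalIntegrable u' volume a b) (hv' : IntervalIntegrable v' volume a b)
    (hud : ∀ᵐ x, x ∈ uIcc a b → HasDerivAt u (u' x) x)
    (hvd : ∀ᵐ x, x ∈ uIcc a b → HasDerivAt v (v' x) x) :
    ∫ x in a..b, u x • v' x = u b • v b - u a • v a - ∫ x in a..b, u' x • v x := by
  have huv' := hv'.continuousOn_smul hu.continuousOn
  have hu'v := hu'.smul_continuousOn hv.continuousOn
  rw [eq_sub_iff_add_eq, ← intervalIntegral.integral_add huv' hu'v]
  refine intervalIntegral_eq_sub_of_absolutelyContinuousOnInterval (hu.fun_smul hv)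
    (huv'.add hu'v) ?_
  filter_upwards [hud, hvd] with x h₁ h₂ hx
  exact (h₁ hx).smul (h₂ hx)

end AbsoluteContinuity

section SchurTest

variable {X Y : Type*} [MeasurableSpace X] [MeasurableSpace Y] {μ : Measure X} {ν : Measure Y}
  {p s : ℝ}

theorem rpow_lintegral_mul_le_of_split (hp : 1 ≤ p) (hs₀ : 0 ≤ s) (hs₁ : s ≤ 1)
    {g k : Y → ℝ≥0∞} (hg : AEMeasurable g ν) (hk : AEMeasurable k ν) :
    (∫⁻ y, g y * k y ∂ν) ^ p ≤
      (∫⁻ y, k y ^ s ∂ν) ^ (p - 1) * ∫⁻ y, g y ^ p * k y ^ (p - s * (p - 1)) ∂ν := by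
  rcases hp.eq_or_lt with rfl | hp
  · simp
  have hp₀ : 0 < p := by positivity
  set q := p.conjExponent with hq
  have hpq : p.HolderConjugate q := .conjExponent hp
  have hq₀ : 0 < q := hpq.symm.pos
  have hp_div_q : p / q = p - 1 := by rw [hq, Real.conjExponent]; field_simp
  have hsplit (y : Y) : g y * k y = g y * k y ^ (1 - s / q) * k y ^ (s / q) := by
    have hsq : s / q ≤ 1 := div_le_one_of_le₀ (hs₁.trans hpq.symm.lt.le) hq₀.le
    rw [mul_assoc, ← ENNReal.rpow_add_of_nonneg _ _ (sub_nonneg.2 hsq) (by positivity),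
      sub_add_cancel, ENNReal.rpow_one]
  have hpow_p (y : Y) : (g y * k y ^ (1 - s / q)) ^ p = g y ^ p * k y ^ (p - s * (p - 1)) := by
    rw [ENNReal.mul_rpow_of_nonneg _ _ hp₀.le, ← ENNReal.rpow_mul, ← hp_div_q]
    congr 2
    ring
  have hpow_q (y : Y) : (k y ^ (s / q)) ^ q = k y ^ s := by
    rw [← ENNReal.rpow_mul, div_mul_cancel₀ _ hq₀.ne']
  calc (∫⁻ y, g y * k y ∂ν) ^ p
      = (∫⁻ y, g y * k y ^ (1 - s / q) * k y ^ (s / q) ∂ν) ^ p := by simp only [← hsplit]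
    _ ≤ ((∫⁻ y, g y ^ p * k y ^ (p - s * (p - 1)) ∂ν) ^ (1 / p) *
          (∫⁻ y, k y ^ s ∂ν) ^ (1 / q)) ^ p := by
        simp only [← hpow_p, ← hpow_q]
        gcongr
        exact ENNReal.lintegral_mul_le_Lp_mul_Lq ν hpq (hg.mul (hk.pow_const _)) (hk.pow_const _)
    _ = _ := by
        rw [ENNReal.mul_rpow_of_nonneg _ _ hp₀.le, ← ENNReal.rpow_mul, ← ENNReal.rpow_mul,
          one_div_mul_cancel hp₀.ne', ENNReal.rpow_one, one_div_mul_eq_div, hp_div_q, mul_comm]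

theorem lintegral_rpow_lintegral_mul_le [SFinite μ] [SFinite ν] (hp : 1 ≤ p) (hs₀ : 0 ≤ s)
    (hs₁ : s ≤ 1) {g : Y → ℝ≥0∞} {K : X → Y → ℝ≥0∞} (hg : AEMeasurable g ν)
    (hK : Measurable (Function.uncurry K)) {M C : ℝ≥0∞}
    (hM : ∀ᵐ x ∂μ, ∫⁻ y, K x y ^ s ∂ν ≤ M)
    (hC : ∀ᵐ y ∂ν, ∫⁻ x, K x y ^ (p - s * (p - 1)) ∂μ ≤ C) :
    ∫⁻ x, (∫⁻ y, g y * K x y ∂ν) ^ p ∂μ ≤ M ^ (p - 1) * (C * ∫⁻ y, g y ^ p ∂ν) := by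
  have : 0 ≤ p - 1 := sub_nonneg.2 hp
  have hKx (x : X) : Measurable (K x) := hK.of_uncurry_left
  have hKy (y : Y) : Measurable fun x => K x y := hK.of_uncurry_right
  have hgK : AEMeasurable (fun xy : X × Y => g xy.2 ^ p * K xy.1 xy.2 ^ (p - s * (p - 1)))
      (μ.prod ν) :=
    (hg.pow_const p).comp_snd.mul (hK.pow_const _).aemeasurable
  calc ∫⁻ x, (∫⁻ y, g y * K x y ∂ν) ^ p ∂μ
      ≤ ∫⁻ x, M ^ (p - 1) * ∫⁻ y, g y ^ p * K x y ^ (p - s * (p - 1)) ∂ν ∂μ := by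
        refine lintegral_mono_ae (hM.mono fun x hx => ?_)
        refine (rpow_lintegral_mul_le_of_split hp hs₀ hs₁ hg (hKx x).aemeasurable).trans ?_
        gcongr
    _ = M ^ (p - 1) * ∫⁻ y, ∫⁻ x, g y ^ p * K x y ^ (p - s * (p - 1)) ∂μ ∂ν := by
        rw [lintegral_const_mul'' _ hgK.lintegral_prod_right', lintegral_lintegral_swap hgK]
    _ ≤ M ^ (p - 1) * ∫⁻ y, C * g y ^ p ∂ν := by
        refine mul_le_mul' le_rfl (lintegral_mono_ae (hC.mono fun y hy => ?_))
        rw [lintegral_const_mul _ ((hKy y).pow_const _), mul_comm]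
        gcongr
    _ = M ^ (p - 1) * (C * ∫⁻ y, g y ^ p ∂ν) := by rw [lintegral_const_mul'' _ (hg.pow_const p)]

end SchurTest

section KernelEstimates

section Haar

variable {E : Type*} [NormedAddCommGroup E] [MeasurableSpace E] [BorelSpace E] {μ : Measure E}

theorem setLIntegral_ball_zero_comp_sub_le [μ.IsAddHaarMeasure] (f : E → ℝ≥0∞) {ζ : E} {R : ℝ}
    (hζ : ‖ζ‖ ≤ R) :
    ∫⁻ x in ball 0 R, f (x - ζ) ∂μ ≤ ∫⁻ x in ball 0 (2 * R), f x ∂μ := by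
  rw [← (measurePreserving_sub_right μ ζ).setLIntegral_comp_preimage_emb
    (measurableEmbedding_subRight ζ) f (ball 0 (2 * R))]
  refine lintegral_mono_set fun x hx => ?_
  rw [mem_ball_zero_iff] at hx
  rw [mem_preimage, mem_ball_zero_iff]
  linarith [norm_sub_le x ζ]

theorem setLIntegral_ball_zero_inv_enorm_rpow_lt_top [NormedSpace ℝ E] [FiniteDimensional ℝ E]
    [Nontrivial E] [μ.IsAddHaarMeasure] {e : ℝ} (he : e < Module.finrank ℝ E) (R : ℝ) :
    ∫⁻ x in ball 0 R, ‖x‖ₑ⁻¹ ^ e ∂μ < ⊤ := by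
  have hint : IntegrableOn (fun x : E => ‖x‖ ^ (-e)) (ball 0 R) μ := by
    refine integrableOn_ball_of_norm_le_rpow (C := 1) (α := e) Module.finrank_pos he
      (.of_forall fun x => ?_)
      (by fun_prop : Measurable fun x : E => ‖x‖ ^ (-e)).aestronglyMeasurable
    rw [Real.norm_of_nonneg (by positivity), one_mul]
  refine (lintegral_congr_ae ?_).trans_lt hint.lintegral_lt_top
  filter_upwards [ae_restrict_of_ae (μ.ae_ne 0)] with x hx
  rw [← ofReal_norm, ENNReal.inv_rpow, ← ENNReal.rpow_neg,
    ENNReal.ofReal_rpow_of_pos (norm_pos_iff.2 hx)]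

end Haar

theorem abs_le_pi_div_two_mul_norm_exp_mul_I_sub_one {x : ℝ} (hx : |x| ≤ π) :
    |x| ≤ π / 2 * ‖exp (x * I) - 1‖ := by
  have hsin := Real.mul_abs_le_abs_sin (x := x / 2) (by rw [abs_div, abs_two]; linarith)
  rw [mul_comm (x : ℂ), norm_exp_I_mul_ofReal_sub_one, norm_mul, Real.norm_two, Real.norm_eq_abs]
  rw [abs_div, abs_two] at hsin
  calc |x| = π * (2 / π * (|x| / 2)) := by field_simp
    _ ≤ π * |Real.sin (x / 2)| := by gcongr
    _ = π / 2 * (2 * |Real.sin (x / 2)|) := by ring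

theorem norm_sub_exp_arg_mul_I_le {w z : ℂ} (hw : ‖w‖ = 1) (hz : ‖z‖ ≤ 1) :
    ‖w - exp (z.arg * I)‖ ≤ 2 * ‖w - z‖ := by
  have hz_arg : ‖z - exp (z.arg * I)‖ = 1 - ‖z‖ := by
    have : z - exp (z.arg * I) = ((‖z‖ - 1 : ℝ) : ℂ) * exp (z.arg * I) := by
      push_cast
      linear_combination -norm_mul_exp_arg_mul_I z
    rw [this, norm_mul, norm_exp_ofReal_mul_I, norm_real, Real.norm_of_nonpos (by linarith)]
    ring
  calc ‖w - exp (z.arg * I)‖ ≤ ‖w - z‖ + ‖z - exp (z.arg * I)‖ :=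
        norm_sub_le_norm_sub_add_norm_sub ..
    _ = ‖w - z‖ + (‖w‖ - ‖z‖) := by rw [hz_arg, hw]
    _ ≤ 2 * ‖w - z‖ := by linarith [norm_sub_norm_le w z]

theorem abs_sub_arg_le_pi_mul_norm_exp_mul_I_sub {z : ℂ} (hz : ‖z‖ ≤ 1) {t : ℝ}
    (ht : |t - z.arg| ≤ π) : |t - z.arg| ≤ π * ‖exp (t * I) - z‖ := by
  have hchord : ‖exp ((t - z.arg : ℝ) * I) - 1‖ = ‖exp (t * I) - exp (z.arg * I)‖ := by
    have : exp (t * I) - exp (z.arg * I) = (exp ((t - z.arg : ℝ) * I) - 1) * exp (z.arg * I) := by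
      rw [sub_mul, ← exp_add, one_mul]
      push_cast
      ring_nf
    rw [this, norm_mul, norm_exp_ofReal_mul_I, mul_one]
  calc |t - z.arg| ≤ π / 2 * ‖exp (t * I) - exp (z.arg * I)‖ :=
        hchord ▸ abs_le_pi_div_two_mul_norm_exp_mul_I_sub_one ht
    _ ≤ π / 2 * (2 * ‖exp (t * I) - z‖) := by
        gcongr
        exact norm_sub_exp_arg_mul_I_le (norm_exp_ofReal_mul_I t) hz
    _ = π * ‖exp (t * I) - z‖ := by ring

theorem inv_enorm_exp_mul_I_sub_le {z : ℂ} (hz : ‖z‖ ≤ 1) {t : ℝ} (ht : |t - z.arg| ≤ π) :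
    ‖exp (t * I) - z‖ₑ⁻¹ ≤ ENNReal.ofReal π * ‖t - z.arg‖ₑ⁻¹ := by
  have hπ : ENNReal.ofReal π ≠ 0 := by simpa using Real.pi_pos
  have hle : ‖t - z.arg‖ₑ ≤ ENNReal.ofReal π * ‖exp (t * I) - z‖ₑ := by
    rw [← ofReal_norm, ← ofReal_norm, ← ENNReal.ofReal_mul Real.pi_pos.le]
    exact ENNReal.ofReal_le_ofReal (abs_sub_arg_le_pi_mul_norm_exp_mul_I_sub hz ht)
  rw [← div_eq_mul_inv, ENNReal.le_div_iff_mul_le (.inr hπ) (.inl enorm_ne_top), mul_comm,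
    ← div_eq_mul_inv]
  exact ENNReal.div_le_of_le_mul hle

theorem inv_enorm_exp_mul_I_sub_rpow_le {s : ℝ} (hs : 0 ≤ s) {z : ℂ} (hz : ‖z‖ ≤ 1) {t : ℝ}
    (ht : t ∈ Ioc 0 (2 * π)) :
    ‖exp (t * I) - z‖ₑ⁻¹ ^ s ≤
      ENNReal.ofReal π ^ s * (‖t - z.arg‖ₑ⁻¹ ^ s + ‖t - (z.arg + 2 * π)‖ₑ⁻¹ ^ s) := by
  have := Real.pi_pos
  rw [mul_add]
  rcases le_total (t - z.arg) π with hle | hge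
  · refine le_add_of_le_left ?_
    rw [← ENNReal.mul_rpow_of_nonneg _ _ hs]
    gcongr
    refine inv_enorm_exp_mul_I_sub_le hz (abs_le.2 ⟨?_, hle⟩)
    linarith [arg_le_pi z, ht.1]
  · refine le_add_of_le_right ?_
    rw [← ENNReal.mul_rpow_of_nonneg _ _ hs]
    gcongr
    have hexp : exp (t * I) = exp ((t - 2 * π : ℝ) * I) := by
      push_cast
      rw [sub_mul, exp_periodic.sub_eq]
    rw [hexp, ← sub_sub, sub_right_comm]
    refine inv_enorm_exp_mul_I_sub_le hz (abs_le.2 ⟨?_, ?_⟩)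
    · linarith
    · linarith [neg_pi_lt_arg z, ht.2]

theorem exists_setLIntegral_inv_enorm_exp_mul_I_sub_rpow_le {s : ℝ} (hs₀ : 0 ≤ s) (hs₁ : s < 1) :
    ∃ M : ℝ≥0∞, M ≠ ⊤ ∧ ∀ z : ℂ, ‖z‖ ≤ 1 →
      ∫⁻ t in Ioc 0 (2 * π), ‖exp ((t : ℝ) * I) - z‖ₑ⁻¹ ^ s ≤ M := by
  have := Real.pi_pos
  have hfin : ∫⁻ u : ℝ in ball 0 (2 * (4 * π)), ‖u‖ₑ⁻¹ ^ s < ⊤ :=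
    setLIntegral_ball_zero_inv_enorm_rpow_lt_top (by simpa using hs₁) _
  have hsub : Ioc 0 (2 * π) ⊆ ball 0 (4 * π) := fun t ht => by
    rw [mem_ball_zero_iff, Real.norm_of_nonneg ht.1.le]
    linarith [ht.2]
  have hshift {θ : ℝ} (hθ : |θ| ≤ 4 * π) :
      ∫⁻ t in Ioc 0 (2 * π), ‖t - θ‖ₑ⁻¹ ^ s ≤ ∫⁻ u : ℝ in ball 0 (2 * (4 * π)), ‖u‖ₑ⁻¹ ^ s :=
    (lintegral_mono_set hsub).trans (setLIntegral_ball_zero_comp_sub_le (‖·‖ₑ⁻¹ ^ s) hθ)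
  refine ⟨ENNReal.ofReal π ^ s * (_ + _), ENNReal.mul_ne_top (by simp [hs₀])
    (ENNReal.add_ne_top.2 ⟨hfin.ne, hfin.ne⟩), fun z hz => ?_⟩
  have harg := abs_le.1 (abs_arg_le_pi z)
  have harg_le : |z.arg| ≤ 4 * π := abs_le.2 ⟨by linarith, by linarith⟩
  have harg_add_le : |z.arg + 2 * π| ≤ 4 * π := abs_le.2 ⟨by linarith, by linarith⟩
  calc ∫⁻ t in Ioc 0 (2 * π), ‖exp ((t : ℝ) * I) - z‖ₑ⁻¹ ^ s
      ≤ ∫⁻ t in Ioc 0 (2 * π), ENNReal.ofReal π ^ s *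
          (‖t - z.arg‖ₑ⁻¹ ^ s + ‖t - (z.arg + 2 * π)‖ₑ⁻¹ ^ s) :=
        setLIntegral_mono' measurableSet_Ioc fun t ht => inv_enorm_exp_mul_I_sub_rpow_le hs₀ hz ht
    _ = ENNReal.ofReal π ^ s * ((∫⁻ t in Ioc 0 (2 * π), ‖t - z.arg‖ₑ⁻¹ ^ s) +
          ∫⁻ t in Ioc 0 (2 * π), ‖t - (z.arg + 2 * π)‖ₑ⁻¹ ^ s) := by
        rw [lintegral_const_mul _ (by fun_prop), lintegral_add_left (by fun_prop)]
    _ ≤ _ := mul_le_mul' le_rfl (add_le_add (hshift harg_le) (hshift harg_add_le))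

theorem exists_setLIntegral_ball_inv_enorm_exp_mul_I_sub_rpow_le {e : ℝ} (he : e < 2) :
    ∃ C : ℝ≥0∞, C ≠ ⊤ ∧ ∀ t : ℝ,
      ∫⁻ z in ball (0 : ℂ) 1, ‖exp (t * I) - z‖ₑ⁻¹ ^ e ≤ C := by
  have hfin : ∫⁻ w : ℂ in ball 0 (2 * 1), ‖w‖ₑ⁻¹ ^ e < ⊤ :=
    setLIntegral_ball_zero_inv_enorm_rpow_lt_top (by simpa using he) _
  refine ⟨_, hfin.ne, fun t => ?_⟩
  simp_rw [enorm_sub_rev (exp (t * I))]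
  exact setLIntegral_ball_zero_comp_sub_le (‖·‖ₑ⁻¹ ^ e) (norm_exp_ofReal_mul_I t).le

theorem setLIntegral_ball_rpow_lintegral_mul_inv_enorm_lt_top {p : ℝ} (hp : 1 ≤ p) {g : ℝ → ℝ≥0∞}
    (hg : AEMeasurable g (volume.restrict (Ioc 0 (2 * π))))
    (hgp : ∫⁻ t in Ioc 0 (2 * π), g t ^ p < ⊤) :
    ∫⁻ z in ball (0 : ℂ) 1, (∫⁻ t in Ioc 0 (2 * π), g t * ‖exp ((t : ℝ) * I) - z‖ₑ⁻¹) ^ p < ⊤ := by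
  -- Any `s ∈ [0, 1)` with `p - s * (p - 1) < 2` would do.
  set s : ℝ := 1 - 1 / (2 * p) with hs
  have hs₀ : 0 ≤ s := by
    rw [hs, sub_nonneg, div_le_one (by positivity)]
    linarith
  have hs₁ : s < 1 := sub_lt_self 1 (by positivity)
  have he : p - s * (p - 1) < 2 := by
    calc p - s * (p - 1) = 3 / 2 - 1 / (2 * p) := by rw [hs]; field_simp; ring
      _ < 3 / 2 := sub_lt_self _ (by positivity)
      _ < 2 := by norm_num
  obtain ⟨M, hM_top, hM⟩ := exists_setLIntegral_inv_enorm_exp_mul_I_sub_rpow_le hs₀ hs₁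
  obtain ⟨C, hC_top, hC⟩ := exists_setLIntegral_ball_inv_enorm_exp_mul_I_sub_rpow_le he
  have hK : Measurable (Function.uncurry fun (z : ℂ) (t : ℝ) => ‖exp (t * I) - z‖ₑ⁻¹) := by
    unfold Function.uncurry
    fun_prop
  have hM' : ∀ᵐ z ∂volume.restrict (ball (0 : ℂ) 1),
      ∫⁻ t in Ioc 0 (2 * π), ‖exp ((t : ℝ) * I) - z‖ₑ⁻¹ ^ s ≤ M := by
    filter_upwards [ae_restrict_mem measurableSet_ball] with z hz
    exact hM z (mem_ball_zero_iff.1 hz).le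
  exact (lintegral_rpow_lintegral_mul_le hp hs₀ hs₁.le hg hK hM' (.of_forall hC)).trans_lt
    (ENNReal.mul_lt_top (ENNReal.rpow_lt_top_of_nonneg (sub_nonneg.2 hp) hM_top)
      (ENNReal.mul_lt_top hC_top.lt_top hgp))

end KernelEstimates

section CauchyTransform

variable {E : Type*} [NormedAddCommGroup E] [NormedSpace ℂ E] {f : ℂ → E} {c z : ℂ} {R : ℝ}

theorem circleMap_sub_ne_zero (hz : z ∈ ball c R) (t : ℝ) : circleMap c R t - z ≠ 0 :=
  sub_ne_zero.2 (circleMap_ne_mem_ball hz t)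

theorem circleIntegrable_inv_sub_pow_smul (hf : CircleIntegrable f c R) (hz : z ∈ ball c R)
    (n : ℕ) : CircleIntegrable (fun ζ => ((ζ - z) ^ n)⁻¹ • f ζ) c R := by
  refine hf.continuousOn_smul (ContinuousOn.inv₀ (by fun_prop) fun ζ hζ => pow_ne_zero n ?_)
  rw [abs_of_pos (pos_of_mem_ball hz)] at hζ
  exact sub_ne_zero.2 (sphere_disjoint_ball.ne_of_mem hζ hz)

theorem hasDerivAt_circleIntegral_inv_sub_smul (hf : CircleIntegrable f c R) (hz : z ∈ ball c R) :
    HasDerivAt (fun w => ∮ ζ in C(c, R), (ζ - w)⁻¹ • f ζ)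
      (∮ ζ in C(c, R), ((ζ - z) ^ 2)⁻¹ • f ζ) z := by
  have hR : 0 < R := pos_of_mem_ball hz
  obtain ⟨r, hzr, hrR⟩ := exists_between (mem_ball.1 hz)
  have hint {w : ℂ} (hw : w ∈ ball c R) : CircleIntegrable (fun ζ => (ζ - w)⁻¹ • f ζ) c R := by
    simpa only [pow_one] using circleIntegrable_inv_sub_pow_smul hf hw 1
  simp only [circleIntegral]
  refine (intervalIntegral.hasDerivAt_integral_of_dominated_loc_of_deriv_le
    (F := fun w t => deriv (circleMap c R) t • (circleMap c R t - w)⁻¹ • f (circleMap c R t))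
    (F' := fun w t =>
      deriv (circleMap c R) t • ((circleMap c R t - w) ^ 2)⁻¹ • f (circleMap c R t))
    (bound := fun t => R * (((R - r) ^ 2)⁻¹ * ‖f (circleMap c R t)‖))
    (isOpen_ball.mem_nhds (mem_ball.2 hzr)) ?_ (hint hz).out
    (circleIntegrable_inv_sub_pow_smul hf hz 2).out.def'.aestronglyMeasurable ?_
    ((hf.norm.const_mul _).const_mul _) ?_).2
  · filter_upwards [isOpen_ball.mem_nhds hz] with w hw
    exact (hint hw).out.def'.aestronglyMeasurable
  · refine .of_forall fun t _ w hw => ?_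
    have hdist : R - r ≤ ‖circleMap c R t - w‖ := by
      have hcircle := mem_sphere.1 (circleMap_mem_sphere c hR.le t)
      rw [← dist_eq_norm]
      linarith [dist_triangle (circleMap c R t) w c, mem_ball.1 hw]
    have : 0 < R - r := sub_pos.2 hrR
    rw [norm_smul, norm_smul, norm_inv, norm_pow, deriv_circleMap, norm_mul, norm_I, mul_one,
      norm_circleMap_zero, abs_of_pos hR]
    gcongr
  · refine .of_forall fun t _ w hw => ?_
    have hne := circleMap_sub_ne_zero (ball_subset_ball hrR.le hw) t
    have hinv : HasDerivAt (fun w => (circleMap c R t - w)⁻¹)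
        (((circleMap c R t - w) ^ 2)⁻¹) w := by
      simpa using! ((hasDerivAt_id w).const_sub (circleMap c R t)).inv hne
    exact (hinv.smul_const _).const_smul _

theorem circleIntegral_inv_sub_sq_smul_eq_intervalIntegral [CompleteSpace E] {f' : ℝ → E}
    (hf : AbsolutelyContinuousOnInterval (fun t => f (circleMap c R t)) 0 (2 * π))
    (hf' : IntervalIntegrable f' volume 0 (2 * π))
    (hderiv : ∀ᵐ t, t ∈ uIcc 0 (2 * π) → HasDerivAt (fun t => f (circleMap c R t)) (f' t) t)
    (hz : z ∈ ball c R) :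
    ∮ ζ in C(c, R), ((ζ - z) ^ 2)⁻¹ • f ζ =
      ∫ t in 0..2 * π, (circleMap c R t - z)⁻¹ • f' t := by
  set u : ℝ → ℂ := fun t => (circleMap c R t - z)⁻¹
  set u' : ℝ → ℂ := fun t => -deriv (circleMap c R) t / (circleMap c R t - z) ^ 2
  have hu (t : ℝ) : HasDerivAt u (u' t) t :=
    ((differentiable_circleMap c R t).hasDerivAt.sub_const z).inv (circleMap_sub_ne_zero hz t)
  have hu'_cont : Continuous u' := by
    simp only [u', deriv_circleMap]
    exact ((continuous_circleMap 0 R).mul_const I).neg.div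
      (((continuous_circleMap c R).sub continuous_const).pow 2)
      fun t => pow_ne_zero 2 (circleMap_sub_ne_zero hz t)
  have hu_ac : AbsolutelyContinuousOnInterval u 0 (2 * π) :=
    ContDiffOn.absolutelyContinuousOnInterval (contDiff_one_iff_deriv.2
      ⟨fun t => (hu t).differentiableAt, by rwa [deriv_eq hu]⟩).contDiffOn
  have hper : circleMap c R (2 * π) = circleMap c R 0 := (periodic_circleMap c R).eq
  rw [intervalIntegral_smul_deriv_of_absolutelyContinuousOnInterval hu_ac hf
      (hu'_cont.intervalIntegrable _ _) hf' (.of_forall fun t _ => hu t) hderiv]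
  simp only [u, u', hper, sub_self, zero_sub, ← intervalIntegral.integral_neg, circleIntegral]
  congr 1 with t
  rw [smul_smul, neg_div, neg_smul, neg_neg, div_eq_mul_inv]

/-- The Cauchy transform of a function on the unit circle, as a function on the open unit disc. -/
def cauchyTransform (f : ℂ → E) (z : ℂ) : E :=
  (2 * π * I : ℂ)⁻¹ • ∮ ζ in C(0, 1), (ζ - z)⁻¹ • f ζ

theorem hasDerivAt_cauchyTransform (hf : CircleIntegrable f 0 1) (hz : z ∈ ball 0 1) :
    HasDerivAt (cauchyTransform f)
      ((2 * π * I : ℂ)⁻¹ • ∮ ζ in C(0, 1), ((ζ - z) ^ 2)⁻¹ • f ζ) z :=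
  (hasDerivAt_circleIntegral_inv_sub_smul hf hz).const_smul _

theorem differentiableOn_cauchyTransform (hf : CircleIntegrable f 0 1) :
    DifferentiableOn ℂ (cauchyTransform f) (ball 0 1) := fun _ hz =>
  (hasDerivAt_cauchyTransform hf hz).differentiableAt.differentiableWithinAt

theorem cauchyTransform_eq_intervalIntegral (f : ℂ → E) (z : ℂ) :
    cauchyTransform f z =
      (2 * π : ℂ)⁻¹ • ∫ t in 0..2 * π, (1 - z * exp (-t * I))⁻¹ • f (exp (t * I)) := by
  rw [cauchyTransform, circleIntegral, mul_inv, mul_smul, ← intervalIntegral.integral_smul]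
  congr 2 with t
  rw [deriv_circleMap, circleMap_zero, ofReal_one, one_mul, smul_smul, smul_smul]
  congr 1
  have : exp (t * I) - z = exp (t * I) * (1 - z * exp (-t * I)) := by
    rw [mul_sub, mul_left_comm, ← exp_add]
    simp
  rw [this, mul_inv]
  field_simp [exp_ne_zero]

end CauchyTransform

theorem intervalIntegrable_conj {f : ℝ → ℂ} {μ : Measure ℝ} {a b : ℝ}
    (hf : IntervalIntegrable f μ a b) : IntervalIntegrable (fun t => (starRingEnd ℂ) (f t)) μ a b :=
  ⟨conjCLE.toContinuousLinearMap.integrable_comp hf.1,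
    conjCLE.toContinuousLinearMap.integrable_comp hf.2⟩

theorem circleIntegrable_conj {f : ℂ → ℂ} {c : ℂ} {R : ℝ} (hf : CircleIntegrable f c R) :
    CircleIntegrable (fun ζ => (starRingEnd ℂ) (f ζ)) c R :=
  intervalIntegrable_conj (f := fun t => f (circleMap c R t)) hf

namespace IsACDeriv

variable {F : ℂ → ℂ} {Fd : ℝ → ℂ}

theorem comp_circleMap_eq (hF : IsACDeriv F Fd) :
    (fun t => F (circleMap 0 1 t)) = fun t => F 1 + ∫ s in 0..t, Fd s := by
  funext t
  rw [circleMap_zero, ofReal_one, one_mul, hF.2.2]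

theorem circleIntegrable (hF : IsACDeriv F Fd) : CircleIntegrable F 0 1 := by
  have hcont : Continuous fun t => F (circleMap 0 1 t) := by
    rw [hF.comp_circleMap_eq]
    exact continuous_const.add (intervalIntegral.continuous_primitive hF.1 0)
  exact hcont.intervalIntegrable _ _

theorem absolutelyContinuousOnInterval (hF : IsACDeriv F Fd) (a b : ℝ) :
    AbsolutelyContinuousOnInterval (fun t => F (circleMap 0 1 t)) a b := by
  rw [hF.comp_circleMap_eq]
  exact contDiff_const.contDiffOn.absolutelyContinuousOnInterval.fun_add
    (absolutelyContinuousOnInterval_intervalIntegral (hF.1 a b) (hF.1 0 a))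

theorem ae_hasDerivAt (hF : IsACDeriv F Fd) :
    ∀ᵐ t, HasDerivAt (fun t => F (circleMap 0 1 t)) (Fd t) t := by
  have hloc : LocallyIntegrable Fd := fun t =>
    ⟨Icc (t - 1) (t + 1), Icc_mem_nhds (by simp) (by simp),
      (intervalIntegrable_iff_integrableOn_Icc_of_le (by linarith)).1 (hF.1 _ _)⟩
  rw [hF.comp_circleMap_eq]
  filter_upwards [LocallyIntegrable.ae_hasDerivAt_integral hloc] with t ht
  exact (ht 0).const_add (F 1)

theorem conj (hF : IsACDeriv F Fd) :
    IsACDeriv (fun z => (starRingEnd ℂ) (F z)) fun t => (starRingEnd ℂ) (Fd t) := by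
  refine ⟨fun a b => intervalIntegrable_conj (hF.1 a b), hF.2.1.comp _, fun t => ?_⟩
  beta_reduce
  rw [hF.2.2, map_add, intervalIntegral, intervalIntegral, integral_conj, integral_conj, map_sub]

theorem deriv_cauchyTransform (hF : IsACDeriv F Fd) {z : ℂ} (hz : z ∈ ball 0 1) :
    deriv (cauchyTransform F) z =
      (2 * π * I : ℂ)⁻¹ * ∫ t in 0..2 * π, (exp (t * I) - z)⁻¹ * Fd t := by
  rw [(hasDerivAt_cauchyTransform hF.circleIntegrable hz).deriv,
    circleIntegral_inv_sub_sq_smul_eq_intervalIntegral (hF.absolutelyContinuousOnInterval _ _)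
      (hF.1 _ _) (hF.ae_hasDerivAt.mono fun _ ht _ => ht) hz]
  simp only [circleMap_zero, ofReal_one, one_mul, smul_eq_mul]

theorem enorm_deriv_cauchyTransform_le (hF : IsACDeriv F Fd) {z : ℂ} (hz : z ∈ ball 0 1) :
    ‖deriv (cauchyTransform F) z‖ₑ ≤
      ∫⁻ t in Ioc 0 (2 * π), ‖Fd t‖ₑ * ‖exp ((t : ℝ) * I) - z‖ₑ⁻¹ := by
  have hconst : ‖(2 * π * I : ℂ)⁻¹‖ₑ ≤ 1 := by
    rw [← ofReal_norm, ENNReal.ofReal_le_one, norm_inv, norm_mul, norm_I, mul_one, norm_mul,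
      norm_ofNat, norm_real, Real.norm_of_nonneg Real.pi_pos.le]
    exact inv_le_one_of_one_le₀ (by linarith [Real.pi_gt_three])
  rw [hF.deriv_cauchyTransform hz, enorm_mul, intervalIntegral.integral_of_le (by positivity)]
  refine (mul_le_of_le_one_left' hconst).trans ((enorm_integral_le_lintegral_enorm _).trans_eq ?_)
  congr 1 with t
  have hne : exp (t * I) - z ≠ 0 := by
    simpa [circleMap_zero] using circleMap_sub_ne_zero hz t
  rw [enorm_mul, enorm_inv hne, mul_comm]

end IsACDeriv

/-- Membership in the Bergman space `B^p(𝔻)`. The area measure is not normalized, which does not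
affect finiteness of the integral. -/
def MemBergman (p : ℝ) (g : ℂ → ℂ) : Prop :=
  DifferentiableOn ℂ g (ball 0 1) ∧ IntegrableOn (fun z => ‖g z‖ ^ p) (ball 0 1)

theorem MemBergman.congr {p : ℝ} {g h : ℂ → ℂ} (hg : MemBergman p g) (hgh : EqOn h g (ball 0 1)) :
    MemBergman p h := by
  refine ⟨hg.1.congr hgh, hg.2.congr_fun (fun z hz => ?_) measurableSet_ball⟩
  rw [hgh hz]

theorem IsACDeriv.memBergman_deriv_cauchyTransform {p : ℝ} (hp : 1 ≤ p) {F : ℂ → ℂ} {Fd : ℝ → ℂ}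
    (hF : IsACDeriv F Fd) (hLp : MemLpT (ENNReal.ofReal p) Fd) :
    MemBergman p (deriv (cauchyTransform F)) := by
  have hp₀ : 0 < p := by positivity
  have hdiff := (differentiableOn_cauchyTransform hF.circleIntegrable).deriv isOpen_ball
  have hFd : ∫⁻ t in Ioc 0 (2 * π), ‖Fd t‖ₑ ^ p < ⊤ := by
    simpa [ENNReal.toReal_ofReal hp₀.le] using
      lintegral_rpow_enorm_lt_top_of_eLpNorm_lt_top (by simpa using hp₀) (by simp) hLp.2
  refine ⟨hdiff, ContinuousOn.aestronglyMeasurable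
    (hdiff.continuousOn.norm.rpow_const fun _ _ => .inr hp₀.le) measurableSet_ball, ?_⟩
  refine lt_of_le_of_lt (setLIntegral_mono' measurableSet_ball fun z hz => ?_)
    (setLIntegral_ball_rpow_lintegral_mul_inv_enorm_lt_top hp hLp.1.enorm hFd)
  rw [Real.enorm_rpow_of_nonneg (norm_nonneg _) hp₀.le, enorm_norm]
  gcongr
  exact hF.enorm_deriv_cauchyTransform_le hz

section Wirtinger

variable {f g h : ℂ → ℂ} {z : ℂ}

theorem fderiv_apply_of_eventuallyEq_add_conj {c : ℂ} (hg : DifferentiableAt ℂ g z)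
    (hh : DifferentiableAt ℂ h z) (hf : f =ᶠ[𝓝 z] fun w => g w + (starRingEnd ℂ) (h w) - c)
    (v : ℂ) : fderiv ℝ f z v = v * deriv g z + (starRingEnd ℂ) (v * deriv h z) := by
  have hg' := hg.hasDerivAt.hasFDerivAt.restrictScalars ℝ
  have hh' := conjCLE.toContinuousLinearMap.hasFDerivAt.comp z
    (hh.hasDerivAt.hasFDerivAt.restrictScalars ℝ)
  rw [(((hg'.add hh').sub_const c).congr_of_eventuallyEq hf).fderiv]
  simp

theorem wdz_eq_deriv {c : ℂ} (hg : DifferentiableAt ℂ g z) (hh : DifferentiableAt ℂ h z)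
    (hf : f =ᶠ[𝓝 z] fun w => g w + (starRingEnd ℂ) (h w) - c) : wdz f z = deriv g z := by
  simp only [wdz, fderiv_apply_of_eventuallyEq_add_conj hg hh hf, map_mul, conj_I, one_mul]
  linear_combination (-(1 / 2) * (deriv g z - (starRingEnd ℂ) (deriv h z))) * I_mul_I

theorem wdzb_eq_conj_deriv {c : ℂ} (hg : DifferentiableAt ℂ g z) (hh : DifferentiableAt ℂ h z)
    (hf : f =ᶠ[𝓝 z] fun w => g w + (starRingEnd ℂ) (h w) - c) :
    wdzb f z = (starRingEnd ℂ) (deriv h z) := by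
  simp only [wdzb, fderiv_apply_of_eventuallyEq_add_conj hg hh hf, map_mul, conj_I, one_mul]
  linear_combination (1 / 2 * (deriv g z - (starRingEnd ℂ) (deriv h z))) * I_mul_I

end Wirtinger

section PoissonIntegral

theorem poissonKer_eq {w : ℂ} (hw : w ≠ 1) :
    (poissonKer w : ℂ) = (1 - w)⁻¹ + (starRingEnd ℂ) (1 - w)⁻¹ - 1 := by
  have hne : 1 - w ≠ 0 := sub_ne_zero.2 hw.symm
  have hne' : 1 - (starRingEnd ℂ) w ≠ 0 := by simpa using (map_ne_zero (starRingEnd ℂ)).2 hne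
  rw [poissonKer]
  push_cast
  rw [← mul_conj', ← mul_conj', map_inv₀, map_sub, map_one]
  field_simp
  ring

variable {F : ℂ → ℂ} {z : ℂ}

theorem conj_cauchyTransform_conj_eq (F : ℂ → ℂ) (z : ℂ) :
    (starRingEnd ℂ) (cauchyTransform (fun ζ => (starRingEnd ℂ) (F ζ)) z) =
      (2 * π : ℂ)⁻¹ * ∫ t in 0..2 * π,
        (starRingEnd ℂ) (1 - z * exp (-t * I))⁻¹ * F (exp (t * I)) := by
  simp only [cauchyTransform_eq_intervalIntegral, smul_eq_mul,
    intervalIntegral.integral_of_le Real.two_pi_pos.le, ← integral_conj, map_mul, map_inv₀,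
    map_ofNat, conj_ofReal, conj_conj]

theorem poissonInt_eq (hF : CircleIntegrable F 0 1) (hz : z ∈ ball 0 1) :
    poissonInt F z = cauchyTransform F z +
      (starRingEnd ℂ) (cauchyTransform (fun ζ => (starRingEnd ℂ) (F ζ)) z) -
        cauchyTransform F 0 := by
  have hF' : IntervalIntegrable (fun t : ℝ => F (exp (t * I))) volume 0 (2 * π) := by
    simpa [CircleIntegrable, circleMap_zero] using hF
  have hne (t : ℝ) : z * exp (-t * I) ≠ 1 := fun h => by
    have hnorm : ‖exp (-t * I)‖ = 1 := by simpa using norm_exp_ofReal_mul_I (-t)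
    have hz1 := congrArg norm h
    rw [norm_mul, hnorm, mul_one, norm_one] at hz1
    exact (mem_ball_zero_iff.1 hz).ne hz1
  have hker : Continuous fun t : ℝ => (1 - z * exp (-t * I))⁻¹ :=
    Continuous.inv₀ (by fun_prop) fun t => sub_ne_zero.2 (hne t).symm
  have hint := hF'.continuousOn_mul hker.continuousOn
  have hint_conj := hF'.continuousOn_mul (continuous_conj.comp hker).continuousOn
  simp only [Function.comp_apply] at hint_conj
  rw [conj_cauchyTransform_conj_eq]
  simp only [cauchyTransform_eq_intervalIntegral, smul_eq_mul, zero_mul, sub_zero, inv_one, one_mul]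
  rw [← mul_add, ← mul_sub, ← intervalIntegral.integral_add hint hint_conj,
    ← intervalIntegral.integral_sub (hint.add hint_conj) hF', poissonInt, one_div]
  congr 2 with t
  rw [poissonKer_eq (hne t)]
  ring

theorem poissonInt_eventuallyEq (hF : CircleIntegrable F 0 1) (hz : z ∈ ball 0 1) :
    poissonInt F =ᶠ[𝓝 z] fun w => cauchyTransform F w +
      (starRingEnd ℂ) (cauchyTransform (fun ζ => (starRingEnd ℂ) (F ζ)) w) -
        cauchyTransform F 0 := by
  filter_upwards [isOpen_ball.mem_nhds hz] with w hw using poissonInt_eq hF hw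

theorem eqOn_wdz_poissonInt (hF : CircleIntegrable F 0 1) :
    EqOn (wdz (poissonInt F)) (deriv (cauchyTransform F)) (ball 0 1) := fun _ hz =>
  wdz_eq_deriv (hasDerivAt_cauchyTransform hF hz).differentiableAt
    (hasDerivAt_cauchyTransform (circleIntegrable_conj hF) hz).differentiableAt
    (poissonInt_eventuallyEq hF hz)

theorem eqOn_conj_wdzb_poissonInt (hF : CircleIntegrable F 0 1) :
    EqOn (fun z => (starRingEnd ℂ) (wdzb (poissonInt F) z))
      (deriv (cauchyTransform fun ζ => (starRingEnd ℂ) (F ζ))) (ball 0 1) := fun z hz => by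
  beta_reduce
  rw [wdzb_eq_conj_deriv (hasDerivAt_cauchyTransform hF hz).differentiableAt
    (hasDerivAt_cauchyTransform (circleIntegrable_conj hF) hz).differentiableAt
    (poissonInt_eventuallyEq hF hz), conj_conj]

end PoissonIntegral

/-- For `p ∈ [1,∞)`, `F : 𝕋 → ℂ` absolutely continuous with
`Ḟ ∈ L^p(𝕋)` and `f = P[F]`, both `f_z` and `conj (f_z̄)` belong to the Bergman space
`B^p(𝔻)`: they are analytic on `𝔻` and `∫_𝔻 |f_z|^p dσ < ∞`, `∫_𝔻 |f_z̄|^p dσ < ∞`. -/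
theorem stmt13 (p : ℝ) (hp : 1 ≤ p) (F : ℂ → ℂ) (Fd : ℝ → ℂ)
    (hF : IsACDeriv F Fd) (hLp : MemLpT (ENNReal.ofReal p) Fd) :
    DifferentiableOn ℂ (wdz (poissonInt F)) (ball (0:ℂ) 1) ∧
    DifferentiableOn ℂ (fun z => (starRingEnd ℂ) (wdzb (poissonInt F) z)) (ball (0:ℂ) 1) ∧
    MeasureTheory.IntegrableOn (fun z => ‖wdz (poissonInt F) z‖ ^ p) (ball (0:ℂ) 1) volume ∧
    MeasureTheory.IntegrableOn (fun z => ‖wdzb (poissonInt F) z‖ ^ p) (ball (0:ℂ) 1) volume := by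
  have hconj : MemLpT (ENNReal.ofReal p) fun t => (starRingEnd ℂ) (Fd t) :=
    hLp.of_le (continuous_conj.comp_aestronglyMeasurable hLp.1) (by simp)
  have hwdz : MemBergman p (wdz (poissonInt F)) :=
    (hF.memBergman_deriv_cauchyTransform hp hLp).congr (eqOn_wdz_poissonInt hF.circleIntegrable)
  have hwdzb : MemBergman p fun z => (starRingEnd ℂ) (wdzb (poissonInt F) z) :=
    (hF.conj.memBergman_deriv_cauchyTransform hp hconj).congr
      (eqOn_conj_wdzb_poissonInt hF.circleIntegrable)
  exact ⟨hwdz.1, hwdzb.1, hwdz.2, by simpa only [norm_conj] using hwdzb.2⟩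

end
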